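/- Let α = (α_2, 0, 0, …), so factorizations are into transpositions only. Then H̃(α) for α_2 = n − 1 (i.e., the number of inequivalent minimal transposition factorizations of the n-cycle) equals the number of plane trees (drawn in the plane, rooted at a leaf) with n − 1 vertices of degree 4, and these numbers satisfy T(2) = 1, T(3) = 3, T(4) = 12 for n = 2, 3, 4. -/

import Mathlib

/-- Equivalence of factorizations: generated by swapping two adjacent
commuting factors. -/
inductive FactEquiv {n : ℕ} : List (Equiv.Perm (Fin n)) → List (Equiv.Perm (Fin n)) → Prop
  | refl (l) : FactEquiv l l
  | swap (l₁ l₂ : List (Equiv.Perm (Fin n))) (a b : Equiv.Perm (Fin n)) (h : a * b = b * a) :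
      FactEquiv (l₁ ++ a :: b :: l₂) (l₁ ++ b :: a :: l₂)
  | trans {l₁ l₂ l₃} : FactEquiv l₁ l₂ → FactEquiv l₂ l₃ → FactEquiv l₁ l₃

/-- Minimal factorizations of the `n`-cycle into `n − 1` transpositions. -/
def TransFact (n : ℕ) : Type :=
  {l : List (Equiv.Perm (Fin n)) //
    l.length = n - 1 ∧ (∀ σ ∈ l, σ.IsSwap) ∧ l.prod = finRotate n}

/-- `T n` = number of inequivalent minimal transposition factorizations. -/
noncomputable def T (n : ℕ) : ℕ :=
  Nat.card (Quot (fun l₁ l₂ : TransFact n => FactEquiv l₁.1 l₂.1))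

/-- A plane tree: a node with an ordered list of child subtrees; `node 0 _`
is a leaf.  A rooted plane tree with a leaf root is encoded by the subtree
below the root, so a non-root vertex of degree `d` has `d − 1` children. -/
inductive PTree : Type
  | node : (k : ℕ) → (Fin k → PTree) → PTree

/-- Number of leaves of a plane tree. -/
def PTree.numLeaves : PTree → ℕ
  | .node k f => if k = 0 then 1 else ∑ i : Fin k, PTree.numLeaves (f i)

/-- Number of internal (non-leaf) vertices. -/
def PTree.internalCount : PTree → ℕ
  | .node k f => (if k = 0 then 0 else 1) + ∑ i : Fin k, PTree.internalCount (f i)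

/-- Every internal vertex has 3 children (degree 4 counting the parent edge). -/
def PTree.ternary : PTree → Prop
  | .node k f => (k = 0 ∨ k = 3) ∧ ∀ i, PTree.ternary (f i)

/-!
A ternary tree of size `m` encodes a noncrossing tree on `m + 1` consecutive points of a circle,
and the transpositions along the edges of that tree, taken in a suitable order, multiply to the
long cycle. This sends ternary trees to classes of minimal factorizations, and the map is bijective.

It is injective because swapping adjacent factors does not change the multiset of transpositions,
while the root of the ternary tree is recovered from the edges as the largest neighbour of the first
point.

It is surjective by an induction over all permutations and all products of transpositions that are
as short as the number of cycles permits. In such a product the first transposition `(a b)` has to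
split the cycle through `a` and `b` in two, since joining two cycles would leave too few factors for
the remaining product. By induction that product is equivalent to a product of words of ternary
trees, one for each cycle, and the trees of the two halves can be grafted into one: one half
occupies an interval of the circle, so its transpositions commute with the transpositions of the
other half that they have to pass.

The numbers of ternary trees satisfy the convolution recurrence expressed by `ξ = 1 + x ξ³`.
-/

open List Equiv

namespace FactEquiv
variable {n : ℕ} {l l' : List (Perm (Fin n))}

theorem append_left (k : List (Perm (Fin n))) (h : FactEquiv l l') :
    FactEquiv (k ++ l) (k ++ l') := by
  induction h with
  | refl l => exact .refl _
  | swap l₁ l₂ a b h => simpa only [append_assoc] using FactEquiv.swap (k ++ l₁) l₂ a b h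
  | trans _ _ ih₁ ih₂ => exact ih₁.trans ih₂

theorem append_right (k : List (Perm (Fin n))) (h : FactEquiv l l') :
    FactEquiv (l ++ k) (l' ++ k) := by
  induction h with
  | refl l => exact .refl _
  | swap l₁ l₂ a b h =>
    simpa only [append_assoc, cons_append] using FactEquiv.swap l₁ (l₂ ++ k) a b h
  | trans _ _ ih₁ ih₂ => exact ih₁.trans ih₂

theorem perm (h : FactEquiv l l') : l ~ l' := by
  induction h with
  | refl l => exact .refl _
  | swap l₁ l₂ a b _ => exact (Perm.swap _ _ _).append_left _
  | trans _ _ ih₁ ih₂ => exact ih₁.trans ih₂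

theorem cons_comm {σ : Perm (Fin n)} (h : ∀ τ ∈ l, Commute σ τ) :
    FactEquiv (σ :: l) (l ++ [σ]) := by
  induction l with
  | nil => exact .refl _
  | cons τ l ih =>
    exact (FactEquiv.swap [] l σ τ (h τ mem_cons_self)).trans
      (append_left [τ] (ih fun τ hτ => h τ (mem_cons_of_mem _ hτ)))

theorem append_comm (h : ∀ σ ∈ l, ∀ τ ∈ l', Commute σ τ) : FactEquiv (l ++ l') (l' ++ l) := by
  induction l with
  | nil => simpa only [nil_append, append_nil] using FactEquiv.refl l'
  | cons σ l ih =>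
    have moveTail := append_left [σ] (ih fun σ hσ => h σ (mem_cons_of_mem _ hσ))
    have moveHead := append_right l (cons_comm (h σ mem_cons_self))
    simp only [cons_append, nil_append, append_assoc] at moveTail moveHead ⊢
    exact moveTail.trans moveHead

theorem append_of_commute {u k v w : List (Perm (Fin n))} (z : List (Perm (Fin n)))
    (hk : ∀ σ ∈ u, ∀ τ ∈ k, Commute σ τ) (h : FactEquiv (u ++ v) w) :
    FactEquiv (u ++ (k ++ (v ++ z))) (k ++ (w ++ z)) := by
  have moved := append_right (v ++ z) (append_comm hk)
  have replaced := append_left k (append_right z h)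
  simp only [append_assoc] at moved replaced ⊢
  exact moved.trans replaced

theorem flatten_of_perm {L L' : List (List (Perm (Fin n)))} (h : L ~ L')
    (hL : L.Pairwise fun l l' => ∀ σ ∈ l, ∀ τ ∈ l', Commute σ τ) :
    FactEquiv L.flatten L'.flatten := by
  induction h with
  | nil => exact .refl _
  | cons l _ ih => exact append_left l (ih hL.of_cons)
  | swap l l' L =>
    have hcomm := append_right L.flatten (append_comm (rel_of_pairwise_cons hL mem_cons_self))
    simpa only [flatten_cons, append_assoc] using hcomm
  | trans h₁ _ ih₁ ih₂ =>
    exact (ih₁ hL).trans (ih₂ (hL.perm h₁ fun hl σ hσ τ hτ => (hl τ hτ σ hσ).symm))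

end FactEquiv

section FormPerm
variable {α : Type*}

theorem disjoint_of_forall_mem {σ τ : Perm α} {c d : List α} (hσ : ∀ y, σ y ≠ y → y ∈ c)
    (hτ : ∀ y, τ y ≠ y → y ∈ d) (h : c.Disjoint d) : σ.Disjoint τ := by
  intro y
  by_contra! hy
  exact h (hσ y hy.1) (hτ y hy.2)

variable [DecidableEq α]

theorem formPerm_append_cons (l : List α) (x : α) (l' : List α) :
    formPerm (l ++ x :: l') = formPerm (l ++ [x]) * formPerm (x :: l') := by
  induction l with
  | nil => simp only [nil_append, formPerm_singleton, one_mul]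
  | cons y l ih =>
    cases l with
    | nil => simp only [cons_append, nil_append, formPerm_cons_cons, formPerm_singleton, mul_one]
    | cons z l => simp only [cons_append, formPerm_cons_cons, mul_assoc] at ih ⊢; rw [ih]

theorem formPerm_append_comm {l l' : List α} (h : (l ++ l').Nodup) :
    formPerm (l ++ l') = formPerm (l' ++ l) :=
  formPerm_eq_of_isRotated h isRotated_append

theorem formPerm_cut {X I Y : List α} {a b : α} (h : (X ++ (a :: I ++ b :: Y)).Nodup) :
    swap a b * formPerm (X ++ (a :: I ++ b :: Y)) =
      formPerm (a :: I) * formPerm (X ++ b :: Y) := by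
  have hI : (a :: I ++ [b]).Nodup := by grind
  have hXY : (X ++ b :: Y).Nodup := by grind
  calc swap a b * formPerm (X ++ (a :: I ++ b :: Y))
      = swap a b * formPerm (a :: I ++ b :: (Y ++ X)) := by
        rw [formPerm_append_comm h]; simp only [cons_append, append_assoc]
    _ = swap a b * (formPerm (b :: a :: I) * formPerm (b :: (Y ++ X))) := by
        rw [formPerm_append_cons, formPerm_append_comm hI, singleton_append]
    _ = formPerm (a :: I) * formPerm (X ++ b :: Y) := by
        rw [formPerm_cons_cons, swap_comm b a, mul_assoc, swap_mul_self_mul,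
          formPerm_append_comm hXY, cons_append]

theorem formPerm_eq_mul_swap_mul {A B C : List α} {x j : α}
    (h : (x :: (A ++ (B ++ j :: C))).Nodup) :
    formPerm (x :: (A ++ (B ++ j :: C))) =
      formPerm (B ++ [j]) * (swap x j * (formPerm (x :: A) * formPerm (j :: C))) := by
  have hAB : (x :: A ++ (B ++ [j])).Nodup := by grind
  calc formPerm (x :: (A ++ (B ++ j :: C)))
      = formPerm (x :: A ++ (B ++ [j])) * formPerm (j :: C) := by
        simpa only [cons_append, append_assoc] using formPerm_append_cons (x :: (A ++ B)) j C
    _ = formPerm (B ++ j :: (x :: A)) * formPerm (j :: C) := by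
        rw [formPerm_append_comm hAB, append_assoc, singleton_append]
    _ = formPerm (B ++ [j]) * (swap x j * (formPerm (x :: A) * formPerm (j :: C))) := by
        rw [formPerm_append_cons, formPerm_cons_cons, swap_comm j x, mul_assoc, mul_assoc]

theorem formPerm_disjoint {c d : List α} (h : c.Disjoint d) :
    (formPerm c).Disjoint (formPerm d) :=
  disjoint_of_forall_mem (fun _ => mem_of_formPerm_apply_ne) (fun _ => mem_of_formPerm_apply_ne) h

theorem formPerm_finRange (n : ℕ) : formPerm (finRange n) = finRotate n := by
  cases n with
  | zero => exact Subsingleton.elim _ _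
  | succ m =>
    ext i
    have h := formPerm_apply_getElem (finRange (m + 1)) (nodup_finRange _) i
      (by simp only [length_finRange, i.isLt])
    simp only [getElem_finRange, length_finRange, Fin.cast_mk, Fin.eta] at h
    rw [h, finRotate_apply, Fin.val_add, Fin.val_one', Nat.add_mod_mod]

end FormPerm

/-! ### Noncrossing trees -/

/-- Ternary trees. They serve as the common index set of the plane trees with all internal degrees
equal to `4` and of the equivalence classes of factorizations. -/
inductive TernaryTree : Type
  | leaf : TernaryTree
  | node (a b c : TernaryTree) : TernaryTree

namespace TernaryTree

/-- Number of internal nodes. -/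
def size : TernaryTree → ℕ
  | leaf => 0
  | node a b c => a.size + b.size + c.size + 1

/-- The noncrossing tree on the vertices `i, …, i + t.size` encoded by `t`, as a list of edges
`(u, v)` with `u < v`. The edge `(i, j)` joining `i` to its largest neighbour `j` is the root of
`t`; removing it, and cutting at `j`, leaves noncrossing trees on three consecutive intervals, the
last two sharing the vertex `j`. The edges are listed in an order in which the product of the
corresponding transpositions is the long cycle. -/
def edges : TernaryTree → ℕ → List (ℕ × ℕ)
  | leaf, _ => []
  | node a b c, i =>
    b.edges (i + a.size + 1) ++
      (i, i + a.size + b.size + 1) :: (a.edges i ++ c.edges (i + a.size + b.size + 1))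

variable {a b c s t : TernaryTree} {i : ℕ} {e : ℕ × ℕ}

theorem mem_edges_node : e ∈ (node a b c).edges i ↔
    e ∈ b.edges (i + a.size + 1) ∨ e = (i, i + a.size + b.size + 1) ∨
      e ∈ a.edges i ∨ e ∈ c.edges (i + a.size + b.size + 1) := by
  simp only [edges, mem_append, mem_cons]

@[simp]
theorem length_edges (t : TernaryTree) (i : ℕ) : (t.edges i).length = t.size := by
  induction t generalizing i with
  | leaf => rfl
  | node a b c iha ihb ihc =>
    simp only [edges, size, length_append, length_cons, iha, ihb, ihc]
    omega

theorem bounds_of_mem_edges (he : e ∈ t.edges i) :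
    i ≤ e.1 ∧ e.1 < e.2 ∧ e.2 ≤ i + t.size := by
  induction t generalizing i with
  | leaf => exact absurd he not_mem_nil
  | node a b c iha ihb ihc =>
    simp only [size]
    rcases mem_edges_node.1 he with he | rfl | he | he
    · have := ihb he; omega
    · dsimp only; omega
    · have := iha he; omega
    · have := ihc he; omega

theorem exists_mem_edges_crossing {k : ℕ} (hik : i ≤ k) (hk : k < i + t.size) :
    ∃ e ∈ t.edges i, e.1 ≤ k ∧ k < e.2 := by
  induction t generalizing i with
  | leaf => simp only [size] at hk; omega
  | node a b c iha _ ihc =>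
    simp only [size] at hk
    by_cases hka : k < i + a.size
    · obtain ⟨e, he, hek⟩ := iha hik hka
      exact ⟨e, mem_edges_node.2 (by tauto), hek⟩
    by_cases hkj : k < i + a.size + b.size + 1
    · exact ⟨_, mem_edges_node.2 (.inr (.inl rfl)), hik, hkj⟩
    · obtain ⟨e, he, hek⟩ := ihc (not_lt.1 hkj) (by omega)
      exact ⟨e, mem_edges_node.2 (by tauto), hek⟩

theorem le_of_mem_edges_node {v : ℕ} (h : (i, v) ∈ (node a b c).edges i) :
    v ≤ i + a.size + b.size + 1 := by
  rcases mem_edges_node.1 h with h | h | h | h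
  · have := bounds_of_mem_edges h; omega
  · exact (Prod.ext_iff.1 h).2.le
  · have := bounds_of_mem_edges h; omega
  · have := bounds_of_mem_edges h; omega

theorem size_le_of_edges_subset_edges_node (h : s.edges i ⊆ (node a b c).edges i)
    (hs : s.size ≤ a.size + b.size) : s.size ≤ a.size := by
  by_contra! hlt
  obtain ⟨e, he, hek⟩ := exists_mem_edges_crossing (t := s) (i := i) (k := i + a.size)
    (by omega) (by omega)
  have hes := bounds_of_mem_edges he
  rcases mem_edges_node.1 (h he) with h | rfl | h | h
  · have := bounds_of_mem_edges h; omega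
  · dsimp only at hes; omega
  · have := bounds_of_mem_edges h; omega
  · have := bounds_of_mem_edges h; omega

theorem mem_edges_left :
    e ∈ a.edges i ↔ e ∈ (node a b c).edges i ∧ e.2 ≤ i + a.size := by
  have ha := bounds_of_mem_edges (t := a) (i := i) (e := e)
  have hb := bounds_of_mem_edges (t := b) (i := i + a.size + 1) (e := e)
  have hc := bounds_of_mem_edges (t := c) (i := i + a.size + b.size + 1) (e := e)
  grind [mem_edges_node]

theorem mem_edges_middle : e ∈ b.edges (i + a.size + 1) ↔
    e ∈ (node a b c).edges i ∧ i + a.size < e.1 ∧ e.2 ≤ i + a.size + b.size + 1 := by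
  have ha := bounds_of_mem_edges (t := a) (i := i) (e := e)
  have hb := bounds_of_mem_edges (t := b) (i := i + a.size + 1) (e := e)
  have hc := bounds_of_mem_edges (t := c) (i := i + a.size + b.size + 1) (e := e)
  grind [mem_edges_node]

theorem mem_edges_right : e ∈ c.edges (i + a.size + b.size + 1) ↔
    e ∈ (node a b c).edges i ∧ i + a.size + b.size + 1 ≤ e.1 := by
  have ha := bounds_of_mem_edges (t := a) (i := i) (e := e)
  have hb := bounds_of_mem_edges (t := b) (i := i + a.size + 1) (e := e)
  have hc := bounds_of_mem_edges (t := c) (i := i + a.size + b.size + 1) (e := e)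
  grind [mem_edges_node]

theorem sizes_eq_of_edges_eq {a' b' c' : TernaryTree}
    (h : ∀ e, e ∈ (node a b c).edges i ↔ e ∈ (node a' b' c').edges i) :
    a.size = a'.size ∧ b.size = b'.size := by
  have hroot : a.size + b.size = a'.size + b'.size := by
    have hle := le_of_mem_edges_node ((h _).1 (mem_edges_node.2 (.inr (.inl rfl))))
    have hge := le_of_mem_edges_node ((h _).2 (mem_edges_node.2 (.inr (.inl rfl))))
    omega
  have hle : a.size ≤ a'.size := size_le_of_edges_subset_edges_node
    (fun e he => (h e).1 (mem_edges_left.1 he).1) (by omega)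
  have hge : a'.size ≤ a.size := size_le_of_edges_subset_edges_node
    (fun e he => (h e).2 (mem_edges_left.1 he).1) (by omega)
  omega

theorem eq_of_edges_eq (h : ∀ e, e ∈ s.edges i ↔ e ∈ t.edges i) : s = t := by
  induction s generalizing t i with
  | leaf =>
    cases t with
    | leaf => rfl
    | node a b c => exact absurd ((h _).2 (mem_edges_node.2 (.inr (.inl rfl)))) not_mem_nil
  | node a b c iha ihb ihc =>
    cases t with
    | leaf => exact absurd ((h _).1 (mem_edges_node.2 (.inr (.inl rfl)))) not_mem_nil
    | node a' b' c' =>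
      obtain ⟨ha, hb⟩ := sizes_eq_of_edges_eq h
      congr 1
      · refine iha (i := i) fun e => ?_
        rw [mem_edges_left, h e, ha, ← mem_edges_left]
      · refine ihb (i := i + a.size + 1) fun e => ?_
        rw [mem_edges_middle, h e, ha, hb, ← mem_edges_middle]
      · refine ihc (i := i + a.size + b.size + 1) fun e => ?_
        rw [mem_edges_right, h e, ha, hb, ← mem_edges_right]

end TernaryTree

/-- The word of transpositions `(p u p v)` obtained from the list `E` of pairs `(u, v)` by the
vertex labelling `p`. -/
def swapWord {α : Type*} [DecidableEq α] (p : ℕ → α) (E : List (ℕ × ℕ)) : List (Perm α) :=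
  E.map fun e => swap (p e.1) (p e.2)

section SwapWord
variable {α : Type*} [DecidableEq α] {p q : ℕ → α} {N : ℕ}

theorem swapWord_nil : swapWord p [] = [] := rfl

theorem swapWord_cons (e : ℕ × ℕ) (E : List (ℕ × ℕ)) :
    swapWord p (e :: E) = swap (p e.1) (p e.2) :: swapWord p E := rfl

theorem swapWord_append (E F : List (ℕ × ℕ)) :
    swapWord p (E ++ F) = swapWord p E ++ swapWord p F := map_append

theorem mem_of_mem_swapWord {E : List (ℕ × ℕ)} {c : List α} {σ : Perm α}
    (hE : ∀ e ∈ E, p e.1 ∈ c ∧ p e.2 ∈ c) (hσ : σ ∈ swapWord p E) {y : α} (hy : σ y ≠ y) :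
    y ∈ c := by
  obtain ⟨e, he, rfl⟩ := mem_map.1 hσ
  rcases (swap_apply_ne_self_iff.1 hy).2 with rfl | rfl
  exacts [(hE e he).1, (hE e he).2]

theorem commute_of_mem_swapWord (hp : Set.InjOn p (Set.Iio N)) {E F : List (ℕ × ℕ)} {k m : ℕ}
    (hE : ∀ e ∈ E, k ≤ e.1 ∧ e.1 ≤ m ∧ k ≤ e.2 ∧ e.2 ≤ m) (hm : m < N)
    (hF : ∀ f ∈ F, (f.1 < k ∨ m < f.1) ∧ f.1 < N ∧ (f.2 < k ∨ m < f.2) ∧ f.2 < N)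
    {σ τ : Perm α} (hσ : σ ∈ swapWord p E) (hτ : τ ∈ swapWord p F) : Commute σ τ := by
  obtain ⟨e, he, rfl⟩ := mem_map.1 hσ
  obtain ⟨f, hf, rfl⟩ := mem_map.1 hτ
  have hef := hE e he
  have hfe := hF f hf
  have hne {u v : ℕ} (hu : k ≤ u ∧ u ≤ m) (hv : v < k ∨ m < v) (hvN : v < N) : p u ≠ p v :=
    hp.ne (hu.2.trans_lt hm) hvN (by omega)
  refine (disjoint_of_forall_mem (c := [p e.1, p e.2]) (d := [p f.1, p f.2]) ?_ ?_ ?_).commute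
  · intro y hy; simpa using (swap_apply_ne_self_iff.1 hy).2
  · intro y hy; simpa using (swap_apply_ne_self_iff.1 hy).2
  · simp only [disjoint_cons_left, disjoint_nil_left, mem_cons, not_mem_nil, or_false, not_or,
      and_true]
    exact ⟨⟨hne ⟨hef.1, hef.2.1⟩ hfe.1 hfe.2.1, hne ⟨hef.1, hef.2.1⟩ hfe.2.2.1 hfe.2.2.2⟩,
      hne hef.2.2 hfe.1 hfe.2.1, hne hef.2.2 hfe.2.2.1 hfe.2.2.2⟩

theorem swap_mem_swapWord_iff (hp : Set.InjOn p (Set.Iio N)) {E : List (ℕ × ℕ)} {e : ℕ × ℕ}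
    (hE : ∀ f ∈ E, f.1 < f.2 ∧ f.2 < N) (he : e.1 < e.2 ∧ e.2 < N) :
    swap (p e.1) (p e.2) ∈ swapWord p E ↔ e ∈ E := by
  refine ⟨fun h => ?_, fun h => mem_map_of_mem h⟩
  obtain ⟨f, hf, hef⟩ := mem_map.1 h
  obtain ⟨hf₁, hf₂⟩ := hE f hf
  have hinj {u v : ℕ} (hu : u < N) (hv : v < N) : p u = p v ↔ u = v := hp.eq_iff hu hv
  have h₁ := DFunLike.congr_fun hef (p e.1)
  have h₂ := DFunLike.congr_fun hef (p f.1)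
  simp only [swap_apply_left, swap_apply_def] at h₁ h₂
  have : e = f := by grind
  exact this ▸ hf

namespace TernaryTree
variable {t : TernaryTree} {i : ℕ}

theorem eq_of_mem_swapWord_iff {s : TernaryTree} (hp : Set.InjOn p (Set.Iio N)) (hs : s.size < N)
    (ht : t.size < N) (h : ∀ σ, σ ∈ swapWord p (s.edges 0) ↔ σ ∈ swapWord p (t.edges 0)) :
    s = t := by
  have bounds {r : TernaryTree} (hr : r.size < N) (f : ℕ × ℕ) (hf : f ∈ r.edges 0) :
      f.1 < f.2 ∧ f.2 < N := by
    have := bounds_of_mem_edges hf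
    omega
  refine eq_of_edges_eq (i := 0) fun e => ⟨fun he => ?_, fun he => ?_⟩
  · exact (swap_mem_swapWord_iff hp (bounds ht) (bounds hs e he)).1
      ((h _).1 (mem_map_of_mem he))
  · exact (swap_mem_swapWord_iff hp (bounds hs) (bounds ht e he)).1
      ((h _).2 (mem_map_of_mem he))

theorem swapWord_edges_congr {m : ℕ} (h : ∀ u, i ≤ u → u ≤ i + t.size → q u = p (u + m)) :
    swapWord q (t.edges i) = swapWord p (t.edges (i + m)) := by
  induction t generalizing i with
  | leaf => rfl
  | node a b c iha ihb ihc =>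
    simp only [size] at h
    simp only [edges, swapWord_append, swapWord_cons]
    rw [iha fun u hu hu' => h u hu (by omega),
      ihb fun u hu hu' => h u (by omega) (by omega),
      ihc fun u hu hu' => h u (by omega) (by omega), h i le_rfl (by omega),
      h (i + a.size + b.size + 1) (by omega) (by omega)]
    grind

theorem isSwap_of_mem_swapWord (hp : Set.InjOn p (Set.Iio N)) (hN : i + t.size < N)
    {σ : Perm α} (hσ : σ ∈ swapWord p (t.edges i)) : σ.IsSwap := by
  obtain ⟨e, he, rfl⟩ := mem_map.1 hσ
  have hb := bounds_of_mem_edges he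
  exact ⟨_, _, hp.ne (Set.mem_Iio.2 (by omega)) (Set.mem_Iio.2 (by omega)) (by omega), rfl⟩

theorem prod_swapWord (hp : Set.InjOn p (Set.Iio N)) (hN : i + t.size < N) :
    (swapWord p (t.edges i)).prod = formPerm ((range' i (t.size + 1)).map p) := by
  induction t generalizing i with
  | leaf => rfl
  | node a b c iha ihb ihc =>
    simp only [size] at hN
    have hrange : range' i (a.size + b.size + c.size + 1 + 1) =
        i :: (range' (i + 1) a.size ++ (range' (i + a.size + 1) b.size ++
          (i + a.size + b.size + 1) :: range' (i + a.size + b.size + 1 + 1) c.size)) := by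
      rw [show a.size + b.size + c.size + 1 + 1 = a.size + (b.size + (c.size + 1)) + 1 by omega,
        range'_succ, ← range'_append_1, ← range'_append_1, range'_succ,
        show i + 1 + a.size = i + a.size + 1 by omega,
        show i + a.size + 1 + b.size = i + a.size + b.size + 1 by omega]
    have hnodup : ((range' i (a.size + b.size + c.size + 1 + 1)).map p).Nodup := by
      refine Nodup.map_on (fun u hu v hv => ?_) nodup_range'
      rw [mem_range'_1] at hu hv
      exact fun h => hp (Set.mem_Iio.2 (by omega)) (Set.mem_Iio.2 (by omega)) h
    rw [hrange] at hnodup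
    simp only [edges, size, swapWord_append, swapWord_cons, prod_append, prod_cons]
    rw [iha (by omega), ihb (by omega), ihc (by omega), hrange]
    simp only [map_cons, map_append] at hnodup ⊢
    rw [formPerm_eq_mul_swap_mul hnodup]
    have hj : i + a.size + 1 + b.size = i + a.size + b.size + 1 := by omega
    rw [range'_1_concat, hj, range'_succ, range'_succ]
    simp only [map_append, map_cons, map_nil]

end TernaryTree
end SwapWord

/-- The increasing enumeration of the natural numbers outside the interval `[k, k + m)`. -/
def skip (k m u : ℕ) : ℕ := if u < k then u else u + m

theorem skip_of_lt {k m u : ℕ} (h : u < k) : skip k m u = u := if_pos h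

theorem skip_of_le {k m u : ℕ} (h : k ≤ u) : skip k m u = u + m := if_neg h.not_gt

namespace TernaryTree
variable {α : Type*} [DecidableEq α] {p : ℕ → α} {t : TernaryTree} {i k m N : ℕ}

theorem swapWord_skip_of_lt (h : i + t.size < k) :
    swapWord (p ∘ skip k m) (t.edges i) = swapWord p (t.edges i) :=
  swapWord_edges_congr (m := 0) fun _ _ hu => congrArg p (skip_of_lt (hu.trans_lt h))

theorem swapWord_skip_of_le (h : k ≤ i) :
    swapWord (p ∘ skip k m) (t.edges i) = swapWord p (t.edges (i + m)) :=
  swapWord_edges_congr fun _ hu _ => congrArg p (skip_of_le (h.trans hu))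

/-- The word of the noncrossing tree `s` on the vertices `k, …, k + s.size`, preceded by the
transposition joining `k` to the next vertex `k + s.size + 1`. -/
def graftWord (p : ℕ → α) (s : TernaryTree) (k : ℕ) : List (Perm α) :=
  swapWord p ((k, k + (s.size + 1)) :: s.edges k)

theorem commute_of_mem_graftWord {s : TernaryTree} (hp : Set.InjOn p (Set.Iio N))
    {E : List (ℕ × ℕ)} (hk : k + (s.size + 1) < N)
    (hE : ∀ e ∈ E, (e.1 < k ∨ k + (s.size + 1) < e.1) ∧ e.1 < N ∧
      (e.2 < k ∨ k + (s.size + 1) < e.2) ∧ e.2 < N) :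
    ∀ σ ∈ graftWord p s k, ∀ τ ∈ swapWord p E, Commute σ τ := by
  refine fun σ hσ τ hτ => commute_of_mem_swapWord hp (fun e he => ?_) hk hE hσ hτ
  rcases mem_cons.1 he with rfl | he
  · dsimp only; omega
  · have := bounds_of_mem_edges he; omega

variable {n : ℕ} {f : ℕ → Fin n} {s a b c r : TernaryTree}

theorem graft_root (s t : TernaryTree) :
    FactEquiv (graftWord f s i ++ swapWord (f ∘ skip i (s.size + 1)) (t.edges i))
      (swapWord f ((node s leaf t).edges i)) := by
  rw [swapWord_skip_of_le le_rfl, graftWord, ← swapWord_append]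
  exact .refl _

theorem graft_left (hf : Set.InjOn f (Set.Iio N)) (hik : i < k) (hka : k ≤ i + a.size)
    (hN : i + (node a b c).size + (s.size + 1) < N) (hr : r.size = a.size + (s.size + 1))
    (h : FactEquiv (graftWord f s k ++ swapWord (f ∘ skip k (s.size + 1)) (a.edges i))
      (swapWord f (r.edges i))) :
    FactEquiv (graftWord f s k ++ swapWord (f ∘ skip k (s.size + 1)) ((node a b c).edges i))
      (swapWord f ((node r b c).edges i)) := by
  simp only [size] at hN
  have hcomm := commute_of_mem_graftWord hf (s := s) (k := k)
    (E := b.edges (i + r.size + 1) ++ [(i, i + r.size + b.size + 1)]) (by omega) fun e he => by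
      rcases mem_append.1 he with he | he
      · have := bounds_of_mem_edges he; omega
      · obtain rfl := mem_singleton.1 he
        dsimp only; omega
  have key := FactEquiv.append_of_commute
    (swapWord f (c.edges (i + r.size + b.size + 1))) hcomm h
  have hb : i + r.size + 1 = i + a.size + 1 + (s.size + 1) := by omega
  have hj : i + r.size + b.size + 1 = i + a.size + b.size + 1 + (s.size + 1) := by omega
  simp only [edges, swapWord_append, swapWord_cons, Function.comp_apply]
  rw [swapWord_skip_of_le (t := b) (by omega), swapWord_skip_of_le (t := c) (by omega),
    skip_of_lt hik, skip_of_le (by omega), ← hb, ← hj]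
  simpa only [swapWord_append, swapWord_cons, swapWord_nil, append_assoc, cons_append,
    nil_append] using key

theorem graft_middle (hik : i + a.size < k) (hkj : k ≤ i + a.size + b.size + 1)
    (hr : r.size = b.size + (s.size + 1))
    (h : FactEquiv
      (graftWord f s k ++ swapWord (f ∘ skip k (s.size + 1)) (b.edges (i + a.size + 1)))
      (swapWord f (r.edges (i + a.size + 1)))) :
    FactEquiv (graftWord f s k ++ swapWord (f ∘ skip k (s.size + 1)) ((node a b c).edges i))
      (swapWord f ((node a r c).edges i)) := by
  have key := FactEquiv.append_right
    (swapWord f ((i, i + a.size + r.size + 1) ::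
      (a.edges i ++ c.edges (i + a.size + r.size + 1)))) h
  have hj : i + a.size + r.size + 1 = i + a.size + b.size + 1 + (s.size + 1) := by omega
  simp only [edges, swapWord_append, swapWord_cons, Function.comp_apply, append_assoc] at key ⊢
  rwa [swapWord_skip_of_lt hik, swapWord_skip_of_le hkj, skip_of_lt (u := i) (by omega),
    skip_of_le hkj, ← hj]

theorem graft_right (hf : Set.InjOn f (Set.Iio N)) (hkj : i + a.size + b.size + 1 < k)
    (hN : k + (s.size + 1) < N)
    (h : FactEquiv (graftWord f s k ++
        swapWord (f ∘ skip k (s.size + 1)) (c.edges (i + a.size + b.size + 1)))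
      (swapWord f (r.edges (i + a.size + b.size + 1)))) :
    FactEquiv (graftWord f s k ++ swapWord (f ∘ skip k (s.size + 1)) ((node a b c).edges i))
      (swapWord f ((node a b r).edges i)) := by
  have hcomm := commute_of_mem_graftWord hf (s := s) (k := k)
    (E := b.edges (i + a.size + 1) ++ (i, i + a.size + b.size + 1) :: a.edges i) hN
    fun e he => by
      rcases mem_append.1 he with he | he
      · have := bounds_of_mem_edges he; omega
      rcases mem_cons.1 he with rfl | he
      · dsimp only; omega
      · have := bounds_of_mem_edges he; omega
  have key := FactEquiv.append_of_commute [] hcomm h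
  simp only [edges, swapWord_append, swapWord_cons, Function.comp_apply]
  rw [swapWord_skip_of_lt (t := a) (by omega), swapWord_skip_of_lt (t := b) (by omega),
    skip_of_lt (by omega), skip_of_lt hkj]
  simpa only [swapWord_append, swapWord_cons, append_assoc, cons_append, append_nil] using key

theorem exists_graft (hf : Set.InjOn f (Set.Iio N)) (s t : TernaryTree) (hik : i ≤ k)
    (hkt : k ≤ i + t.size) (hN : i + t.size + (s.size + 1) < N) :
    ∃ r : TernaryTree, r.size = t.size + (s.size + 1) ∧
      FactEquiv (graftWord f s k ++ swapWord (f ∘ skip k (s.size + 1)) (t.edges i))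
        (swapWord f (r.edges i)) := by
  induction t generalizing i with
  | leaf =>
    obtain rfl : i = k := hik.antisymm hkt
    exact ⟨node s leaf leaf, by simp only [size]; omega, graft_root s leaf⟩
  | node a b c iha ihb ihc =>
    obtain rfl | hlt := hik.eq_or_lt
    · exact ⟨node s leaf (node a b c), by simp only [size]; omega, graft_root s _⟩
    have hsize : (node a b c).size = a.size + b.size + c.size + 1 := rfl
    rcases le_or_gt k (i + a.size) with hka | hka
    · obtain ⟨r, hr, h⟩ := iha hik hka (by omega)
      exact ⟨node r b c, by simp only [size]; omega, graft_left hf hlt hka hN hr h⟩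
    rcases le_or_gt k (i + a.size + b.size + 1) with hkj | hkj
    · obtain ⟨r, hr, h⟩ := ihb (i := i + a.size + 1) (by omega) (by omega) (by omega)
      exact ⟨node a r c, by simp only [size]; omega, graft_middle hka hkj hr h⟩
    · obtain ⟨r, hr, h⟩ := ihc (i := i + a.size + b.size + 1) (by omega) (by omega) (by omega)
      exact ⟨node a b r, by simp only [size]; omega, graft_right hf hkj (by omega) h⟩

end TernaryTree

/-! ### Words on a cycle -/

section Word
variable {α : Type*} [Inhabited α] {c : List α} {t : TernaryTree}

theorem getD_injOn (hc : c.Nodup) : Set.InjOn (c.getD · default) (Set.Iio c.length) := by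
  intro u hu v hv huv
  simp only [getD_eq_getElem _ _ hu, getD_eq_getElem _ _ hv] at huv
  exact hc.getElem_inj_iff.1 huv

theorem map_getD_range' (c : List α) : (range' 0 c.length).map (c.getD · default) = c :=
  ext_getElem (by simp only [length_map, length_range']) fun u _ hu => by
    simp only [getElem_map, getElem_range', zero_add, one_mul, getD_eq_getElem _ _ hu]

theorem getD_append_cons_append (X I Y : List α) (a b : α) {u : ℕ} :
    (X ++ b :: Y).getD u default =
      (X ++ (a :: I ++ b :: Y)).getD (skip X.length (I.length + 1) u) default := by
  rcases lt_or_ge u X.length with hu | hu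
  · rw [skip_of_lt hu, getD_append _ _ _ _ hu, getD_append _ _ _ _ hu]
  · rw [skip_of_le hu, getD_append_right _ _ _ _ hu, getD_append_right _ _ _ _ (by omega),
      getD_append_right _ _ _ _ (by simp only [length_cons]; omega)]
    congr 1
    simp only [length_cons]
    omega

variable [DecidableEq α]

/-- The factorization of the cycle `formPerm c` encoded by the ternary tree `t`, whose vertices
`0, …, t.size` are labelled by the entries of `c`. It is meaningful for `c.length = t.size + 1`. -/
def word (c : List α) (t : TernaryTree) : List (Perm α) :=
  swapWord (c.getD · default) (t.edges 0)

@[simp]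
theorem length_word (c : List α) (t : TernaryTree) : (word c t).length = t.size := by
  rw [word, swapWord, length_map, TernaryTree.length_edges]

theorem mem_of_mem_word (ht : t.size + 1 = c.length) {σ : Perm α} (hσ : σ ∈ word c t) {y : α}
    (hy : σ y ≠ y) : y ∈ c := by
  refine mem_of_mem_swapWord (fun e he => ?_) hσ hy
  have hb := TernaryTree.bounds_of_mem_edges he
  rw [getD_eq_getElem _ _ (by omega), getD_eq_getElem _ _ (by omega)]
  exact ⟨getElem_mem _, getElem_mem _⟩

theorem isSwap_of_mem_word (hc : c.Nodup) (ht : t.size + 1 = c.length) {σ : Perm α}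
    (hσ : σ ∈ word c t) : σ.IsSwap :=
  TernaryTree.isSwap_of_mem_swapWord (getD_injOn hc) (by omega) hσ

theorem prod_word (hc : c.Nodup) (ht : t.size + 1 = c.length) : (word c t).prod = formPerm c := by
  rw [word, TernaryTree.prod_swapWord (getD_injOn hc) (by omega), ht, map_getD_range']

theorem eq_of_mem_word_iff {s : TernaryTree} (hc : c.Nodup) (hs : s.size < c.length)
    (ht : t.size < c.length) (h : ∀ σ, σ ∈ word c s ↔ σ ∈ word c t) : s = t :=
  TernaryTree.eq_of_mem_swapWord_iff (getD_injOn hc) hs ht h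

theorem exists_word_graft {n : ℕ} [NeZero n] {X I Y : List (Fin n)} {a b : Fin n}
    {s t : TernaryTree} (hc : (X ++ (a :: I ++ b :: Y)).Nodup) (hs : s.size + 1 = (a :: I).length)
    (ht : t.size + 1 = (X ++ b :: Y).length) :
    ∃ r : TernaryTree, r.size + 1 = (X ++ (a :: I ++ b :: Y)).length ∧
      FactEquiv (swap a b :: (word (a :: I) s ++ word (X ++ b :: Y) t))
        (word (X ++ (a :: I ++ b :: Y)) r) := by
  set c := X ++ (a :: I ++ b :: Y)
  have hI : s.size = I.length := by simpa only [length_cons, add_left_inj] using hs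
  have hXY : t.size = X.length + Y.length := by
    simp only [length_append, length_cons] at ht; omega
  have hlen : c.length = X.length + I.length + Y.length + 2 := by
    simp only [c, length_append, length_cons]; omega
  obtain ⟨r, hr, h⟩ := TernaryTree.exists_graft (getD_injOn hc) s t (i := 0) (k := X.length)
    (Nat.zero_le _) (by omega) (by omega)
  have houter : swapWord ((c.getD · default) ∘ skip X.length (s.size + 1)) (t.edges 0) =
      word (X ++ b :: Y) t :=
    (TernaryTree.swapWord_edges_congr (m := 0) fun u _ _ => by
      rw [hI]; exact getD_append_cons_append X I Y a b).symm
  have hinner : TernaryTree.graftWord (c.getD · default) s X.length =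
      swap a b :: word (a :: I) s := by
    have hX (u : ℕ) : c.getD (u + X.length) default = (a :: I ++ b :: Y).getD u default := by
      rw [getD_append_right _ _ _ _ (by omega), Nat.add_sub_cancel]
    have hword : word (a :: I) s = swapWord (c.getD · default) (s.edges (0 + X.length)) :=
      TernaryTree.swapWord_edges_congr fun u _ hu => by rw [hX, getD_append _ _ _ _ (by omega)]
    have ha : c.getD X.length default = a := by
      simpa only [zero_add, cons_append, getD_cons_zero] using hX 0
    have hb : c.getD (X.length + (s.size + 1)) default = b := by
      rw [add_comm, hX, getD_append_right _ _ _ _ hs.ge, hs, Nat.sub_self, getD_cons_zero]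
    rw [hword, zero_add, TernaryTree.graftWord, swapWord_cons, ha, hb]
  rw [houter, hinner] at h
  exact ⟨r, by omega, h⟩

end Word

/-! ### Cycle decompositions and forests -/

/-- `IsCycleDecomposition σ cs` means that `cs` lists the cycles of `σ`, fixed points included, each
written as a list of points in cyclic order. -/
structure IsCycleDecomposition {n : ℕ} (σ : Perm (Fin n)) (cs : List (List (Fin n))) : Prop where
  flatten_perm : cs.flatten ~ finRange n
  nil_notMem : [] ∉ cs
  prod_formPerm : (cs.map formPerm).prod = σ

namespace IsCycleDecomposition
variable {n : ℕ} {σ : Perm (Fin n)} {cs cs' rest : List (List (Fin n))} {a b : Fin n}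

theorem nodup_flatten (h : IsCycleDecomposition σ cs) : cs.flatten.Nodup :=
  h.flatten_perm.nodup_iff.2 (nodup_finRange n)

theorem nodup (h : IsCycleDecomposition σ cs) {c : List (Fin n)} (hc : c ∈ cs) : c.Nodup :=
  (List.nodup_flatten.1 h.nodup_flatten).1 c hc

theorem pairwise_disjoint (h : IsCycleDecomposition σ cs) : cs.Pairwise List.Disjoint :=
  (List.nodup_flatten.1 h.nodup_flatten).2

theorem of_perm (h : IsCycleDecomposition σ cs) (hcs : cs ~ cs') : IsCycleDecomposition σ cs' where
  flatten_perm := hcs.flatten.symm.trans h.flatten_perm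
  nil_notMem := fun hnil => h.nil_notMem (hcs.mem_iff.2 hnil)
  prod_formPerm := by
    have hcomm : (cs.map formPerm).Pairwise Commute :=
      h.pairwise_disjoint.map _ fun _ _ hcd => (formPerm_disjoint hcd).commute
    rw [← (hcs.map formPerm).prod_eq' hcomm, h.prod_formPerm]

theorem cut_iff {X I Y : List (Fin n)} :
    IsCycleDecomposition (swap a b * σ) ((a :: I) :: (X ++ b :: Y) :: rest) ↔
      IsCycleDecomposition σ ((X ++ (a :: I ++ b :: Y)) :: rest) := by
  have hperm : ((a :: I) :: (X ++ b :: Y) :: rest).flatten ~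
      ((X ++ (a :: I ++ b :: Y)) :: rest).flatten := by
    simpa only [flatten_cons, append_assoc] using
      ((perm_append_comm (l₁ := a :: I) (l₂ := X)).append_right (b :: Y ++ rest.flatten))
  have hprod (hc : (X ++ (a :: I ++ b :: Y)).Nodup) :
      (((a :: I) :: (X ++ b :: Y) :: rest).map formPerm).prod = swap a b * σ ↔
        (((X ++ (a :: I ++ b :: Y)) :: rest).map formPerm).prod = σ := by
    simp only [map_cons, prod_cons]
    rw [← mul_assoc, ← formPerm_cut hc, mul_assoc, mul_right_inj]
  constructor
  · intro h
    have hflat := hperm.symm.trans h.flatten_perm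
    refine ⟨hflat, by have := h.nil_notMem; simp_all, (hprod ?_).1 h.prod_formPerm⟩
    have := hflat.nodup_iff.2 (nodup_finRange n)
    rw [flatten_cons] at this
    exact this.of_append_left
  · intro h
    exact ⟨hperm.trans h.flatten_perm, by have := h.nil_notMem; simp_all,
      (hprod (h.nodup mem_cons_self)).2 h.prod_formPerm⟩

theorem rotate {c c' : List (Fin n)} (h : IsCycleDecomposition σ (c :: rest)) (hc : c ~r c') :
    IsCycleDecomposition σ (c' :: rest) where
  flatten_perm := (hc.perm.symm.append_right _).trans h.flatten_perm
  nil_notMem := by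
    have := h.nil_notMem
    simp only [mem_cons, not_or] at this ⊢
    exact ⟨fun hnil => this.1 (isRotated_nil_iff.1 (hnil ▸ hc)).symm, this.2⟩
  prod_formPerm := by
    rw [map_cons, ← formPerm_eq_of_isRotated (h.nodup mem_cons_self) hc]
    exact h.prod_formPerm

theorem join {X Y X' Y' : List (Fin n)}
    (h : IsCycleDecomposition σ ((X ++ a :: Y) :: (X' ++ b :: Y') :: rest)) :
    IsCycleDecomposition (swap a b * σ) ((X' ++ (a :: (Y ++ X) ++ b :: Y')) :: rest) := by
  rw [← cut_iff, swap_mul_self_mul]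
  exact h.rotate isRotated_append

theorem exists_swap_eq {τ : Perm (Fin n)} (h : IsCycleDecomposition σ cs) (hτ : τ.IsSwap) :
    ∃ (a b : Fin n) (rest : List (List (Fin n))), τ = swap a b ∧
      ((∃ X I Y, cs ~ (X ++ (a :: I ++ b :: Y)) :: rest) ∨
        ∃ X Y X' Y', cs ~ (X ++ a :: Y) :: (X' ++ b :: Y') :: rest) := by
  obtain ⟨a, b, hab, rfl⟩ := hτ
  have hmem (x : Fin n) : ∃ c ∈ cs, x ∈ c :=
    mem_flatten.1 (h.flatten_perm.mem_iff.2 (mem_finRange x))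
  obtain ⟨c, hc, ha⟩ := hmem a
  obtain ⟨d, hd, hb⟩ := hmem b
  have hcs := perm_cons_erase hc
  obtain ⟨X, Y, rfl⟩ := append_of_mem ha
  rcases mem_cons.1 (hcs.mem_iff.1 hd) with rfl | hd
  · rcases mem_append.1 hb with hb | hb
    · obtain ⟨X, I, rfl⟩ := append_of_mem hb
      exact ⟨b, a, _, swap_comm a b, .inl ⟨X, I, Y, by simpa using hcs⟩⟩
    · obtain ⟨I, Y, rfl⟩ := append_of_mem ((mem_cons.1 hb).resolve_left hab.symm)
      exact ⟨a, b, _, rfl, .inl ⟨X, I, Y, hcs⟩⟩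
  · obtain ⟨X', Y', rfl⟩ := append_of_mem hb
    exact ⟨a, b, _, rfl, .inr ⟨X, Y, X', Y', hcs.trans ((perm_cons_erase hd).cons _)⟩⟩

theorem exists_cut_or_join {τ : Perm (Fin n)} (h : IsCycleDecomposition (τ * σ) cs)
    (hτ : τ.IsSwap) :
    (∃ (a b : Fin n) (X I Y : List (Fin n)) (rest : List (List (Fin n))), τ = swap a b ∧
      cs ~ (X ++ (a :: I ++ b :: Y)) :: rest ∧
      IsCycleDecomposition σ ((a :: I) :: (X ++ b :: Y) :: rest)) ∨
    ∃ cs', IsCycleDecomposition σ cs' ∧ cs'.length + 1 = cs.length := by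
  obtain ⟨a, b, rest, rfl, ⟨X, I, Y, hcs⟩ | ⟨X, Y, X', Y', hcs⟩⟩ := h.exists_swap_eq hτ
  · have hcut := cut_iff.2 (h.of_perm hcs)
    rw [swap_mul_self_mul] at hcut
    exact .inl ⟨a, b, X, I, Y, rest, rfl, hcs, hcut⟩
  · have hjoin := (h.of_perm hcs).join
    rw [swap_mul_self_mul] at hjoin
    exact .inr ⟨_, hjoin, by rw [hcs.length_eq, length_cons, length_cons, length_cons]⟩

theorem length_eq_one (h : IsCycleDecomposition 1 cs) {c : List (Fin n)} (hc : c ∈ cs) :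
    c.length = 1 := by
  have hcs := h.of_perm (perm_cons_erase hc)
  have hdisj : (formPerm c).Disjoint ((cs.erase c).map formPerm).prod :=
    Equiv.Perm.disjoint_prod_right _ fun τ hτ => by
      obtain ⟨d, hd, rfl⟩ := mem_map.1 hτ
      exact formPerm_disjoint (rel_of_pairwise_cons hcs.pairwise_disjoint hd)
  have hone : formPerm c = 1 := (hdisj.mul_eq_one_iff.1 hcs.prod_formPerm).1
  have hle := (formPerm_eq_one_iff _ (h.nodup hc)).1 hone
  have hpos := length_pos_iff.2 fun hnil => h.nil_notMem (hnil ▸ hc)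
  omega

theorem le_length {l : List (Perm (Fin n))} (hl : ∀ τ ∈ l, τ.IsSwap)
    (h : IsCycleDecomposition l.prod cs) : n ≤ l.length + cs.length := by
  induction l generalizing cs with
  | nil =>
    have hlen := h.flatten_perm.length_eq
    rw [length_flatten, length_finRange, map_congr_left fun c hc => h.length_eq_one hc,
      map_const', sum_replicate, smul_eq_mul, mul_one] at hlen
    omega
  | cons τ l ih =>
    obtain ⟨hτ, hswaps⟩ := forall_mem_cons.1 hl
    rw [prod_cons] at h
    obtain ⟨a, b, X, I, Y, rest, rfl, hcs, hcut⟩ | ⟨cs', hjoin, hlen⟩ := h.exists_cut_or_join hτ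
    · have hle := ih hswaps hcut
      simp only [length_cons, hcs.length_eq] at hle ⊢
      omega
    · have hle := ih hswaps hjoin
      rw [length_cons]
      omega

end IsCycleDecomposition

section Forest
variable {n : ℕ} [NeZero n] {σ : Perm (Fin n)} {l : List (Perm (Fin n))}
  {cs cs' rest : List (List (Fin n))}

/-- The factorization `l` is equivalent to the concatenation of the words of a family of ternary
trees `F` indexed by the cycles in `cs`. -/
def HasForest (l : List (Perm (Fin n))) (cs : List (List (Fin n))) : Prop :=
  ∃ F : List (Fin n) → TernaryTree, (∀ c ∈ cs, (F c).size + 1 = c.length) ∧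
    FactEquiv l (cs.flatMap fun c => word c (F c))

namespace HasForest

theorem of_perm (h : HasForest l cs) (hdisj : cs.Pairwise List.Disjoint) (hcs : cs ~ cs') :
    HasForest l cs' := by
  obtain ⟨F, hF, hl⟩ := h
  refine ⟨F, fun c hc => hF c (hcs.mem_iff.2 hc), hl.trans ?_⟩
  refine FactEquiv.flatten_of_perm (hcs.map _) (pairwise_map.2 ?_)
  refine hdisj.imp_of_mem fun {c d} hc hd hcd σ hσ τ hτ => Perm.Disjoint.commute ?_
  exact disjoint_of_forall_mem (fun _ => mem_of_mem_word (hF c hc) hσ)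
    (fun _ => mem_of_mem_word (hF d hd) hτ) hcd

theorem cons_swap {X I Y : List (Fin n)} {a b : Fin n}
    (hσ : IsCycleDecomposition σ ((X ++ (a :: I ++ b :: Y)) :: rest))
    (h : HasForest l ((a :: I) :: (X ++ b :: Y) :: rest)) :
    HasForest (swap a b :: l) ((X ++ (a :: I ++ b :: Y)) :: rest) := by
  obtain ⟨F, hF, hl⟩ := h
  simp only [forall_mem_cons] at hF
  obtain ⟨hI, hXY, hrest⟩ := hF
  obtain ⟨r, hr, hgraft⟩ := exists_word_graft (hσ.nodup mem_cons_self) hI hXY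
  set c := X ++ (a :: I ++ b :: Y)
  have hne : ∀ d ∈ rest, d ≠ c := by
    rintro d hd rfl
    have ha : a ∈ c := by simp [c]
    exact rel_of_pairwise_cons hσ.pairwise_disjoint hd ha ha
  refine ⟨Function.update F c r, forall_mem_cons.2 ⟨?_, fun d hd => ?_⟩, ?_⟩
  · rwa [Function.update_self]
  · rw [Function.update_of_ne (hne d hd)]; exact hrest d hd
  · have hwords : (rest.flatMap fun d => word d (Function.update F c r d)) =
        rest.flatMap fun d => word d (F d) :=
      flatMap_congr fun d hd => by rw [Function.update_of_ne (hne d hd)]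
    have hfirst := FactEquiv.append_left [swap a b] hl
    have hlast := FactEquiv.append_right (rest.flatMap fun d => word d (F d)) hgraft
    simp only [flatMap_cons, Function.update_self, hwords, cons_append, nil_append,
      append_assoc] at hfirst hlast ⊢
    exact hfirst.trans hlast

end HasForest

theorem IsCycleDecomposition.hasForest (hl : ∀ τ ∈ l, τ.IsSwap)
    (h : IsCycleDecomposition l.prod cs) (hn : l.length + cs.length = n) : HasForest l cs := by
  induction l generalizing cs with
  | nil =>
    refine ⟨fun _ => .leaf, fun c hc => (h.length_eq_one hc).symm, ?_⟩
    have hnil : (cs.flatMap fun c => word c .leaf) = [] := flatMap_eq_nil_iff.2 fun _ _ => rfl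
    rw [hnil]
    exact .refl _
  | cons τ l ih =>
    obtain ⟨hτ, hswaps⟩ := forall_mem_cons.1 hl
    rw [prod_cons] at h
    obtain ⟨a, b, X, I, Y, rest, rfl, hcs, hcut⟩ | ⟨cs', hjoin, hlen⟩ := h.exists_cut_or_join hτ
    · have hforest := ih hswaps hcut (by
        simp only [length_cons, hcs.length_eq] at hn ⊢
        omega)
      have hcs' := h.of_perm hcs
      exact (hforest.cons_swap hcs').of_perm hcs'.pairwise_disjoint hcs.symm
    · have hle := hjoin.le_length hswaps
      rw [length_cons] at hn
      omega

end Forest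

theorem TransFact.mem_iff_of_quot_eq {n : ℕ} {l l' : TransFact n}
    (h : Quot.mk (fun l₁ l₂ : TransFact n => FactEquiv l₁.1 l₂.1) l = Quot.mk _ l')
    (σ : Perm (Fin n)) : σ ∈ l.1 ↔ σ ∈ l'.1 := by
  have hlift := congrArg (Quot.lift (fun l : TransFact n => σ ∈ l.1)
    fun _ _ hl => propext hl.perm.mem_iff) h
  exact iff_of_eq hlift

section Factorization
variable {n : ℕ} [NeZero n]

theorem isCycleDecomposition_finRotate :
    IsCycleDecomposition (finRotate n) [finRange n] where
  flatten_perm := by rw [flatten_singleton]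
  nil_notMem := by
    simp only [mem_singleton, eq_comm, finRange_eq_nil_iff]
    exact NeZero.ne n
  prod_formPerm := by rw [map_singleton, prod_singleton, formPerm_finRange]

/-- The factorization of the long cycle encoded by a ternary tree. -/
def TransFact.ofTree (t : {t : TernaryTree // t.size = n - 1}) : TransFact n :=
  have ht : t.1.size + 1 = (finRange n).length := by
    rw [t.2, length_finRange, Nat.sub_one_add_one (NeZero.ne n)]
  ⟨word (finRange n) t, by rw [length_word, t.2],
    fun _ => isSwap_of_mem_word (nodup_finRange n) ht,
    by rw [prod_word (nodup_finRange n) ht, formPerm_finRange]⟩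

theorem TransFact.exists_factEquiv_ofTree (l : TransFact n) :
    ∃ t, FactEquiv l.1 (ofTree t).1 := by
  obtain ⟨l, hlen, hl, hprod⟩ := l
  have hn := NeZero.one_le (n := n)
  obtain ⟨F, hF, h⟩ := IsCycleDecomposition.hasForest hl (hprod ▸ isCycleDecomposition_finRotate)
    (by rw [hlen, length_singleton]; omega)
  have hsize := hF _ (mem_singleton_self _)
  rw [length_finRange] at hsize
  exact ⟨⟨F (finRange n), by omega⟩, by
    rwa [flatMap_singleton] at h⟩

theorem T_eq_card_ternaryTree (n : ℕ) [NeZero n] :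
    T n = Nat.card {t : TernaryTree // t.size = n - 1} := by
  symm
  refine Nat.card_eq_of_bijective (fun t => Quot.mk _ (TransFact.ofTree t)) ⟨fun s t hst => ?_, ?_⟩
  · have hsize (t : {t : TernaryTree // t.size = n - 1}) : t.1.size < (finRange n).length := by
      rw [t.2, length_finRange]
      exact Nat.sub_one_lt (NeZero.ne n)
    exact Subtype.ext (eq_of_mem_word_iff (nodup_finRange n) (hsize s) (hsize t)
      (TransFact.mem_iff_of_quot_eq hst))
  · rintro ⟨l⟩
    obtain ⟨t, ht⟩ := l.exists_factEquiv_ofTree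
    exact ⟨t, (Quot.sound (r := fun l₁ l₂ : TransFact n => FactEquiv l₁.1 l₂.1) ht).symm⟩

end Factorization

/-! ### Plane trees and their enumeration -/

namespace TernaryTree

/-- The plane tree whose internal vertices have three children each, in the same order. -/
def toPTree : TernaryTree → PTree
  | leaf => .node 0 Fin.elim0
  | node a b c => .node 3 ![a.toPTree, b.toPTree, c.toPTree]

theorem toPTree_injective : Function.Injective toPTree := by
  intro s
  induction s with
  | leaf =>
    rintro (_ | ⟨a, b, c⟩) h
    · rfl
    · simp only [toPTree, PTree.node.injEq, OfNat.zero_ne_ofNat, false_and] at h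
  | node a b c iha ihb ihc =>
    rintro (_ | ⟨a', b', c'⟩) h
    · simp only [toPTree, PTree.node.injEq, OfNat.ofNat_ne_zero, false_and] at h
    · simp only [toPTree, PTree.node.injEq, heq_eq_eq, true_and] at h
      rw [iha (congrFun h 0), ihb (congrFun h 1), ihc (congrFun h 2)]

theorem ternary_toPTree (t : TernaryTree) : t.toPTree.ternary := by
  induction t with
  | leaf => exact ⟨.inl rfl, fun i => i.elim0⟩
  | node a b c iha ihb ihc =>
    exact ⟨.inr rfl, Fin.forall_fin_succ.2 ⟨iha, Fin.forall_fin_two.2 ⟨ihb, ihc⟩⟩⟩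

theorem internalCount_toPTree (t : TernaryTree) : t.toPTree.internalCount = t.size := by
  induction t with
  | leaf => rfl
  | node a b c iha ihb ihc =>
    rw [toPTree, PTree.internalCount, Fin.sum_univ_three, size]
    change 1 + (a.toPTree.internalCount + b.toPTree.internalCount + c.toPTree.internalCount) = _
    omega

theorem numLeaves_toPTree (t : TernaryTree) : t.toPTree.numLeaves = 2 * t.size + 1 := by
  induction t with
  | leaf => rfl
  | node a b c iha ihb ihc =>
    rw [toPTree, PTree.numLeaves, Fin.sum_univ_three, size]
    change a.toPTree.numLeaves + b.toPTree.numLeaves + c.toPTree.numLeaves = _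
    omega

theorem exists_toPTree_eq {p : PTree} (hp : p.ternary) : ∃ t : TernaryTree, t.toPTree = p := by
  induction p with
  | node k f ih =>
    obtain ⟨rfl | rfl, hf⟩ := hp
    · exact ⟨leaf, congrArg (PTree.node 0) (Subsingleton.elim _ _)⟩
    · obtain ⟨a, ha⟩ := ih 0 (hf 0)
      obtain ⟨b, hb⟩ := ih 1 (hf 1)
      obtain ⟨c, hc⟩ := ih 2 (hf 2)
      refine ⟨node a b c, congrArg (PTree.node 3) ?_⟩
      rw [ha, hb, hc]
      exact FinVec.etaExpand_eq f

theorem card_eq_card_pTree (m : ℕ) : Nat.card {t : TernaryTree // t.size = m} =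
    Nat.card {t : PTree // t.ternary ∧ t.internalCount = m ∧ t.numLeaves = 2 * m + 1} := by
  refine Nat.card_eq_of_bijective (fun t => ⟨t.1.toPTree, t.1.ternary_toPTree,
    by rw [internalCount_toPTree, t.2], by rw [numLeaves_toPTree, t.2]⟩)
    ⟨fun s t h => Subtype.ext (toPTree_injective (congrArg Subtype.val h)), ?_⟩
  rintro ⟨p, hp, hcount, -⟩
  obtain ⟨t, rfl⟩ := exists_toPTree_eq hp
  exact ⟨⟨t, by rw [← hcount, internalCount_toPTree]⟩, rfl⟩

end TernaryTree

open Finset.HasAntidiagonal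

section FiberProd
variable {α β : Type*} (f : α → ℕ) (g : β → ℕ) (m : ℕ)

/-- The pairs of total weight `m`, sorted by the weights of their two entries. -/
def fiberProdEquiv : {x : α × β // f x.1 + g x.2 = m} ≃
    Σ p : antidiagonal m, {x // f x = p.1.1} × {y // g y = p.1.2} where
  toFun x := ⟨⟨(f x.1.1, g x.1.2), mem_antidiagonal.2 x.2⟩, ⟨x.1.1, rfl⟩, ⟨x.1.2, rfl⟩⟩
  invFun y := ⟨(y.2.1, y.2.2), by
    rw [y.2.1.2, y.2.2.2]; exact mem_antidiagonal.1 y.1.2⟩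
  left_inv _ := rfl
  right_inv := by
    rintro ⟨⟨⟨_, _⟩, _⟩, ⟨x, hx⟩, ⟨y, hy⟩⟩
    dsimp only at hx hy
    subst hx hy
    rfl

variable [∀ k, Finite {x // f x = k}] [∀ k, Finite {y // g y = k}]

theorem finite_fiber_prod : Finite {x : α × β // f x.1 + g x.2 = m} :=
  .of_equiv _ (fiberProdEquiv f g m).symm

theorem card_fiber_prod : Nat.card {x : α × β // f x.1 + g x.2 = m} =
    ∑ p ∈ antidiagonal m, Nat.card {x // f x = p.1} * Nat.card {y // g y = p.2} := by
  rw [Nat.card_congr (fiberProdEquiv f g m), Nat.card_sigma]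
  simp only [Nat.card_prod]
  exact Finset.sum_coe_sort _ fun p : ℕ × ℕ => Nat.card {x // f x = p.1} * Nat.card {y // g y = p.2}

end FiberProd

namespace TernaryTree

theorem finite_setOf_size_le (m : ℕ) : {t : TernaryTree | t.size ≤ m}.Finite := by
  induction m with
  | zero =>
    refine (Set.finite_singleton leaf).subset ?_
    rintro (_ | ⟨a, b, c⟩) ht
    · rfl
    · simp only [size, Set.mem_ofPred_eq] at ht; omega
  | succ m ih =>
    refine (((ih.prod (ih.prod ih)).image fun x => node x.1 x.2.1 x.2.2).insert leaf).subset ?_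
    rintro (_ | ⟨a, b, c⟩) ht
    · exact Set.mem_insert _ _
    · simp only [size, Set.mem_ofPred_eq] at ht
      have ha : a.size ≤ m := by omega
      have hb : b.size ≤ m := by omega
      have hc : c.size ≤ m := by omega
      exact .inr ⟨(a, b, c), ⟨ha, hb, hc⟩, rfl⟩

instance finite_size_eq (m : ℕ) : Finite {t : TernaryTree // t.size = m} :=
  ((finite_setOf_size_le m).subset fun _ ht => ht.le).to_subtype

/-- A nonempty ternary tree is determined by the three subtrees of its root. -/
def sizeSuccEquiv (m : ℕ) : {t : TernaryTree // t.size = m + 1} ≃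
    {x : TernaryTree × TernaryTree × TernaryTree // x.1.size + (x.2.1.size + x.2.2.size) = m} where
  toFun
    | ⟨node a b c, h⟩ => ⟨(a, b, c), by simp only [size] at h ⊢; omega⟩
  invFun x := ⟨node x.1.1 x.1.2.1 x.1.2.2, by have := x.2; simp only [size]; omega⟩
  left_inv := by
    rintro ⟨_ | ⟨a, b, c⟩, h⟩
    · exact absurd h (Nat.succ_ne_zero m).symm
    · rfl
  right_inv _ := rfl

theorem card_size_zero : Nat.card {t : TernaryTree // t.size = 0} = 1 := by
  refine Nat.card_eq_one_iff_exists.2 ⟨⟨leaf, rfl⟩, ?_⟩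
  rintro ⟨_ | ⟨a, b, c⟩, h⟩
  · rfl
  · exact absurd h (Nat.succ_ne_zero _)

theorem card_size_succ (m : ℕ) : Nat.card {t : TernaryTree // t.size = m + 1} =
    ∑ p ∈ antidiagonal m, Nat.card {t : TernaryTree // t.size = p.1} *
      ∑ q ∈ antidiagonal p.2, Nat.card {t : TernaryTree // t.size = q.1} *
        Nat.card {t : TernaryTree // t.size = q.2} := by
  have := finite_fiber_prod size size
  refine (Nat.card_congr (sizeSuccEquiv m)).trans
    ((card_fiber_prod size (fun x : TernaryTree × TernaryTree => x.1.size + x.2.size) m).trans ?_)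
  simp only [card_fiber_prod size size]

theorem card_size_one : Nat.card {t : TernaryTree // t.size = 1} = 1 := by
  simp [card_size_succ, card_size_zero]

theorem card_size_two : Nat.card {t : TernaryTree // t.size = 2} = 3 := by
  simp [card_size_succ, card_size_zero, Finset.Nat.antidiagonal_succ]

theorem card_size_three : Nat.card {t : TernaryTree // t.size = 3} = 12 := by
  simp [card_size_succ, card_size_zero, Finset.Nat.antidiagonal_succ]

end TernaryTree

/-- for `α = (n−1, 0, 0, …)`, the number `H̃(α) = T n` of
inequivalent minimal transposition factorizations of the `n`-cycle equals the
number of plane trees rooted at a leaf with `n − 1` internal vertices of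
degree 4 (the subtree below the root leaf then has `2n − 1` leaves), and
`T 2 = 1`, `T 3 = 3`, `T 4 = 12`. -/
theorem trans_fact_count_trees_and_values :
    (∀ n : ℕ, 2 ≤ n →
      T n = Nat.card {t : PTree //
        t.ternary ∧ t.internalCount = n - 1 ∧ t.numLeaves = 2 * n - 1}) ∧
    T 2 = 1 ∧ T 3 = 3 ∧ T 4 = 12 := by
  refine ⟨fun n hn => ?_, ?_, ?_, ?_⟩
  · have : NeZero n := ⟨by omega⟩
    rw [T_eq_card_ternaryTree, TernaryTree.card_eq_card_pTree,
      show 2 * (n - 1) + 1 = 2 * n - 1 by omega]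
  · rw [T_eq_card_ternaryTree, TernaryTree.card_size_one]
  · rw [T_eq_card_ternaryTree, TernaryTree.card_size_two]
  · rw [T_eq_card_ternaryTree, TernaryTree.card_size_three]
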